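/- For each admissible pair (p,t), let Λ₁ = {g ∈ Γ̃(p,t) : g maps the subspace {x ∈ ℂ³ : ⟨x, e₁⟩ = 0} onto itself} and Λ₃₁₂ = {g ∈ Γ̃(p,t) : g maps the subspace {x ∈ ℂ³ : ⟨x, v₃₁₂⟩ = 0} onto itself}. Then the subgroup of GL(3,ℂ) generated by Λ₁ ∪ Λ₃₁₂ has finite index in Γ̃(p,t). -/

import Mathlib

/-!
Write `a` for `R₁` and `j` for `J`.  Put `X = j⁻¹ a j⁻¹` and `Y = j a j⁻¹ a j`.  A direct computation
shows that `a` and `Y` scale the linear functional `⟨·, e₁⟩`, and that `X` scales `⟨·, v₃₁₂⟩`; hence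
the hybrid contains `a`, `X` and `Y` (`R1_form`, `Y_form`, `X_form`).

The group `Γ̃(p,t)` is generated by `a` and `j`, which satisfy `j³ = 1`, `a ^ p = 1` and the braid
relation between `a = R₁` and `j a j⁻¹ = R₂`, whatever the value of `t`.  For `p = 3, 4, 5` these
relations alone force any subgroup `H` containing `a`, `X` and `Y` to have finite index, at most
4, 6 or 12 respectively, by coset enumeration (`cosets_three`, `cosets_four`, `cosets_five`): from
the base point fixed by `a`, `X`, `Y` one reaches a finite set of cosets stable under `a` and `j`.
Geometrically, setting `X = a⁻¹`, that is `(a j⁻¹)² = 1`, turns the abstract group into the `(2,3,p)`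
rotation group of the tetrahedron, octahedron or icosahedron, where `X` and `Y` lie in the vertex
stabilizer `⟨a⟩`; the points found by the enumeration are the vertices of that polyhedron.
The orbit of the base point is then finite, and its stabilizer has finite index
(`finiteIndex_of_stable`).
-/

noncomputable section

open Matrix

/-- η = exp(iπ/p) -/
def eta (p : ℕ) : ℂ := Complex.exp (Real.pi * Complex.I / p)
/-- η̄ = exp(−iπ/p) -/
def etab (p : ℕ) : ℂ := Complex.exp (-(Real.pi * Complex.I / p))
/-- φ = exp(iπt/3) -/
def phi (t : ℝ) : ℂ := Complex.exp (Real.pi * Complex.I * t / 3)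
/-- φ̄ = exp(−iπt/3) -/
def phib (t : ℝ) : ℂ := Complex.exp (-(Real.pi * Complex.I * t / 3))
/-- α = 1/(2 sin(π/p)) -/
def alpha (p : ℕ) : ℂ := 1 / (2 * Real.sin (Real.pi / p))

def R1 (p : ℕ) (t : ℝ) : Matrix (Fin 3) (Fin 3) ℂ :=
  !![eta p ^ 2, -Complex.I * eta p * phib t, -Complex.I * eta p * phi t;
     0, 1, 0;
     0, 0, 1]

def R2 (p : ℕ) (t : ℝ) : Matrix (Fin 3) (Fin 3) ℂ :=
  !![1, 0, 0;
     -Complex.I * eta p * phi t, eta p ^ 2, -Complex.I * eta p * phib t;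
     0, 0, 1]

def R3 (p : ℕ) (t : ℝ) : Matrix (Fin 3) (Fin 3) ℂ :=
  !![1, 0, 0;
     0, 1, 0;
     -Complex.I * eta p * phib t, -Complex.I * eta p * phi t, eta p ^ 2]

def Jmat : Matrix (Fin 3) (Fin 3) ℂ :=
  !![0, 0, 1;
     1, 0, 0;
     0, 1, 0]

def Hmat (p : ℕ) (t : ℝ) : Matrix (Fin 3) (Fin 3) ℂ :=
  !![1, -alpha p * phi t, -alpha p * phib t;
     -alpha p * phib t, 1, -alpha p * phi t;
     -alpha p * phi t, -alpha p * phib t, 1]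

/-- The Hermitian form ⟨x,y⟩ = xᵀ·H·ȳ. -/
def form (p : ℕ) (t : ℝ) (x y : Fin 3 → ℂ) : ℂ :=
  dotProduct x ((Hmat p t).mulVec (fun i => starRingEnd ℂ (y i)))

def v123 (p : ℕ) (t : ℝ) : Fin 3 → ℂ :=
  ![-Complex.I * eta p * phib t, 1, Complex.I * etab p * phi t]
def v231 (p : ℕ) (t : ℝ) : Fin 3 → ℂ :=
  ![Complex.I * etab p * phi t, -Complex.I * eta p * phib t, 1]
def v312 (p : ℕ) (t : ℝ) : Fin 3 → ℂ :=
  ![1, Complex.I * etab p * phi t, -Complex.I * eta p * phib t]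
def v321 (p : ℕ) (t : ℝ) : Fin 3 → ℂ :=
  ![Complex.I * etab p * phib t, 1, -Complex.I * eta p * phi t]
def v132 (p : ℕ) (t : ℝ) : Fin 3 → ℂ :=
  ![-Complex.I * eta p * phi t, Complex.I * etab p * phib t, 1]
def v213 (p : ℕ) (t : ℝ) : Fin 3 → ℂ :=
  ![1, -Complex.I * eta p * phi t, Complex.I * etab p * phib t]

/-- The admissible pairs `(p,t)`: the values for which Mostow's group Γ(p,t) is discrete. -/
def admissible (p : ℕ) (t : ℝ) : Prop :=
  (p = 3 ∧ (t = 0 ∨ t = 1/30 ∨ t = 1/18 ∨ t = 1/12 ∨ t = 5/42 ∨ t = 1/6 ∨ t = 7/30 ∨ t = 1/3)) ∨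
  (p = 4 ∧ (t = 0 ∨ t = 1/12 ∨ t = 3/20 ∨ t = 1/4 ∨ t = 5/12)) ∨
  (p = 5 ∧ (t = 1/10 ∨ t = 1/5 ∨ t = 11/30 ∨ t = 7/10))


/-! ### Finite index from a finite set of cosets -/

open scoped Pointwise in
/-- If a finite set of cosets of `H` contains the trivial coset and is stable under `a` and `j`, then
`H ∩ ⟨a, j⟩` has finite index in `⟨a, j⟩`.  Stability under the inverses is automatic, an injective
self-map of a finite set being onto. -/
lemma finiteIndex_of_stable {G : Type*} [Group G] (H : Subgroup G) (a j : G)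
    (S : Set (G ⧸ H)) (hS : S.Finite) (h1 : ((1 : G) : G ⧸ H) ∈ S)
    (ha : ∀ x ∈ S, a • x ∈ S) (hj : ∀ x ∈ S, j • x ∈ S) :
    (H.subgroupOf (Subgroup.closure {a, j})).FiniteIndex := by
  set K := Subgroup.closure {a, j} with hK
  have key : ∀ g ∈ K, g • S = S := by
    intro g hg
    suffices h : K ≤ MulAction.stabilizer G S from MulAction.mem_stabilizer_iff.mp (h hg)
    rw [hK, Subgroup.closure_le]
    have aux : ∀ g : G, (∀ x ∈ S, g • x ∈ S) → g ∈ MulAction.stabilizer G S := by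
      intro g hg
      rw [MulAction.mem_stabilizer_iff]
      apply Set.Finite.eq_of_subset_of_encard_le' hS
      · rintro _ ⟨x, hx, rfl⟩
        exact hg x hx
      · exact (Set.encard_smul_set g S).ge
    rintro g (rfl | rfl)
    · exact aux _ ha
    · exact aux _ hj
  have hst : MulAction.stabilizer K ((1 : G) : G ⧸ H) = H.subgroupOf K := by
    ext g
    rw [MulAction.mem_stabilizer_iff, Subgroup.mem_subgroupOf]
    change (((g : G) * 1 : G) : G ⧸ H) = ((1 : G) : G ⧸ H) ↔ _
    rw [eq_comm, QuotientGroup.eq]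
    simp
  have horb : (MulAction.orbit K ((1 : G) : G ⧸ H)).Finite := by
    apply hS.subset
    rintro _ ⟨g, rfl⟩
    have h := Set.smul_mem_smul_set (a := (g : G)) h1
    rw [key g g.2] at h
    exact h
  rw [← hst]
  have : Finite (MulAction.orbit K ((1 : G) : G ⧸ H)) := horb
  have : Finite (K ⧸ MulAction.stabilizer K ((1 : G) : G ⧸ H)) :=
    Finite.of_equiv _ (MulAction.orbitEquivQuotientStabilizer K ((1 : G) : G ⧸ H))
  exact Subgroup.finiteIndex_of_finite_quotient

/-! ### Coset enumeration

In the three lemmas below `f` and `g` are the permutations by which `a` and `j` act on the cosets, and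
`P` is the trivial coset.  The hypotheses `hX` and `hY` say that `X` and `Y` fix `P`. -/

section Cosets

variable {Ω : Type*} (f g : Equiv.Perm Ω) (P : Ω)

lemma cosets_three (hf3 : ∀ x, f (f (f x)) = x) (hg3 : ∀ x, g (g (g x)) = x)
    (hP : f P = P) (hX : f (g (g P)) = g P) (hY : g (f (g (g (f (g P))))) = P) :
    ∃ S : Set Ω, S.Finite ∧ P ∈ S ∧ (∀ x ∈ S, f x ∈ S) ∧ (∀ x ∈ S, g x ∈ S) := by
  have ig := g.injective
  have jf := f.injective
  set P1 := g P with h1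
  set P2 := g P1 with h2
  set Q := f P1 with hQ
  have fQ : f Q = P2 := by rw [hQ, ← hX]; exact hf3 _
  have gQ : g Q = Q := by
    have e1 : f (g (g Q)) = f Q := ig (by rw [hY, fQ, h2, h1, hg3])
    have e2 : g (g Q) = Q := jf e1
    have e3 := hg3 Q
    rwa [e2] at e3
  have gP2 : g P2 = P := by rw [h2, h1, hg3]
  refine ⟨{P, P1, P2, Q}, by simp, by simp, ?_, ?_⟩ <;>
    simp [← h1, ← h2, ← hQ, hP, hX, fQ, gQ, gP2]

/-- The points are the vertices of an octahedron: `P`, the four neighbours `P2, P1, Q, S` of `P` in the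
cyclic order given by `f`, and the antipode `W`. -/
lemma cosets_four (hf4 : ∀ x, f (f (f (f x))) = x) (hg3 : ∀ x, g (g (g x)) = x)
    (hB : ∀ x, f (g (f (g (g (f (g x)))))) = g (f (g (g (f (g (f x)))))))
    (hP : f P = P) (hX : f (g (g P)) = g P) (hY : g (f (g (g (f (g P))))) = P) :
    ∃ S : Set Ω, S.Finite ∧ P ∈ S ∧ (∀ x ∈ S, f x ∈ S) ∧ (∀ x ∈ S, g x ∈ S) := by
  have ig := g.injective
  have jf := f.injective
  set P1 := g P with h1
  set P2 := g P1 with h2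
  set Q := f P1 with hQ
  set S := f Q with hS
  have gP2 : g P2 = P := by rw [h2, h1, hg3]
  have fS : f S = P2 := by rw [hS, hQ, ← hX]; exact hf4 _
  set W := g Q with hW
  have gW : g W = S := jf (ig (by rw [hY, fS, gP2]))
  have gS : g S = Q := by rw [← gW, hW, hg3]
  have fW : f W = W := by
    have e := hB S
    rw [gS, ← hS, gS, ← hW, fS, gP2, hP, ← h1, ← h2, hX, ← h2, ← fS] at e
    exact ig ((jf e).trans gW.symm)
  refine ⟨{P, P1, P2, Q, S, W}, by simp, by simp, ?_, ?_⟩ <;>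
    simp [← h1, ← h2, ← hQ, ← hS, ← hW, hP, hX, fS, gS, gP2, gW, fW]

/-- The points are the vertices of an icosahedron: `P`, its neighbours `P2, P1, Q, S, T` in the cyclic
order given by `f`, a second `f`-cycle `W, U, V, c, d`, and the antipode `e`. -/
lemma cosets_five (hf5 : ∀ x, f (f (f (f (f x)))) = x) (hg3 : ∀ x, g (g (g x)) = x)
    (hB : ∀ x, f (g (f (g (g (f (g x)))))) = g (f (g (g (f (g (f x)))))))
    (hP : f P = P) (hX : f (g (g P)) = g P) (hY : g (f (g (g (f (g P))))) = P) :
    ∃ S : Set Ω, S.Finite ∧ P ∈ S ∧ (∀ x ∈ S, f x ∈ S) ∧ (∀ x ∈ S, g x ∈ S) := by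
  have ig := g.injective
  have jf := f.injective
  set P1 := g P with h1
  set P2 := g P1 with h2
  set Q := f P1 with hQ
  set S := f Q with hS
  set T := f S with hT
  have gP2 : g P2 = P := by rw [h2, h1, hg3]
  have fT : f T = P2 := by rw [hT, hS, hQ, ← hX]; exact hf5 _
  set U := g Q with hU
  have gU : g U = T := jf (ig (by rw [hY, fT, gP2]))
  have gT : g T = Q := by rw [← gU, hU, hg3]
  set V := g S with hV
  set W := g V with hW
  have gW : g W = S := by rw [hW, hV, hg3]
  have fW : f W = U := by
    have e := hB T
    rw [gT, ← hS, ← hV, ← hW, fT, gP2, hP, ← h1, ← h2, hX, ← h2, ← fT] at e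
    exact ig ((jf e).trans gU.symm)
  have fU : f U = V := by
    have e := hB P1
    rw [← h2, hX, ← h2, gP2, hP, ← h1, ← hQ, ← hU, ← gT] at e
    have e' : g (g (f U)) = S := jf (ig e.symm)
    exact ig (ig (e'.trans (by rw [← hW, gW])))
  set c := f V with hc
  set d := f c with hd
  have fd : f d = W := by rw [hd, hc, ← fU, ← fW]; exact hf5 _
  have gd : g d = c := by
    have e := hB Q
    rw [← hU, fU, ← hW, gW, ← hT, gT, ← hS, ← hV, ← hc, ← gW, ← fd] at e
    have e' : d = g (g c) := jf (ig e)
    rw [e', hg3]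
  set e := g c with he
  have ge : g e = d := by rw [he, ← gd, hg3]
  have fe : f e = e := by
    have h := hB d
    rw [gd, ← hd, gd, ← he, fd, gW, ← hT, gT, ← hU, fU, ← hW, ← fd] at h
    exact ig ((jf h).trans ge.symm)
  refine ⟨{P, P1, P2, Q, S, T, U, V, W, c, d, e}, by simp, by simp, ?_, ?_⟩ <;>
    simp [← h1, ← h2, ← hQ, ← hS, ← hT, ← hU, ← hV, ← hW, ← hc, ← hd, ← he, hP, hX, fT, gT, gU, gP2,
      gW, fW, fU, fd, gd, ge, fe]

end Cosets

/-- A subgroup containing `a`, `X = j⁻¹ a j⁻¹` and `Y = j a j⁻¹ a j` has finite index in `⟨a, j⟩`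
as soon as `j ^ 3 = 1`, `a ^ p = 1` with `p ∈ {3, 4, 5}`, and `a`, `j a j⁻¹` satisfy the
braid relation (written here as `a (j a j⁻¹) a j = (j a j⁻¹) a (j a j⁻¹) j`). -/
lemma finiteIndex_of_relations {G : Type*} [Group G] (H : Subgroup G) (a j : G) (p : ℕ)
    (hp : p = 3 ∨ p = 4 ∨ p = 5) (hj : j ^ 3 = 1) (ha : a ^ p = 1)
    (hB : a * j * a * j⁻¹ * a * j = j * a * j⁻¹ * a * j * a)
    (haH : a ∈ H) (hX : j⁻¹ * a * j⁻¹ ∈ H) (hY : j * a * j⁻¹ * a * j ∈ H) :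
    (H.subgroupOf (Subgroup.closure {a, j})).FiniteIndex := by
  have hji : j⁻¹ = j * j := by
    rw [inv_eq_iff_mul_eq_one, ← pow_three, hj]
  let f : Equiv.Perm (G ⧸ H) := MulAction.toPerm a
  let g : Equiv.Perm (G ⧸ H) := MulAction.toPerm j
  have hf : ∀ x, f x = a • x := fun _ => rfl
  have hg : ∀ x, g x = j • x := fun _ => rfl
  have fixed : ∀ k ∈ H, k • ((1 : G) : G ⧸ H) = ((1 : G) : G ⧸ H) := by
    intro k hk
    change ((k * 1 : G) : G ⧸ H) = _
    rw [eq_comm, QuotientGroup.eq]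
    simpa using hk
  have g3 : ∀ x, g (g (g x)) = x := by
    intro x
    simp only [hg, smul_smul]
    rw [← pow_three, hj, one_smul]
  have B : ∀ x, f (g (f (g (g (f (g x)))))) = g (f (g (g (f (g (f x)))))) := by
    intro x
    simp only [hf, hg, smul_smul]
    congr 1
    rw [hji] at hB
    simpa [mul_assoc] using hB
  have P0 := fixed a haH
  have PX : f (g (g ((1 : G) : G ⧸ H))) = g ((1 : G) : G ⧸ H) := by
    have h := congrArg (j • ·) (fixed _ hX)
    simp only [smul_smul] at h
    simp only [hf, hg, smul_smul]
    rw [← h, hji]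
    congr 1
    have : j * (j * j * a * (j * j)) = j ^ 3 * (a * (j * j)) := by simp only [pow_three, mul_assoc]
    rw [this, hj, one_mul]
  have PY : g (f (g (g (f (g ((1 : G) : G ⧸ H)))))) = ((1 : G) : G ⧸ H) := by
    have h := fixed _ hY
    rw [hji] at h
    simp only [hf, hg, smul_smul]
    simpa [mul_assoc] using h
  have hS : ∃ S : Set (G ⧸ H), S.Finite ∧ ((1 : G) : G ⧸ H) ∈ S ∧ (∀ x ∈ S, f x ∈ S) ∧
      (∀ x ∈ S, g x ∈ S) := by
    have hap : ∀ x : G ⧸ H, a ^ p • x = x := fun x => by rw [ha, one_smul]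
    rcases hp with rfl | rfl | rfl
    · exact cosets_three f g _ (fun x => by simpa [hf, pow_succ, mul_smul] using hap x) g3 P0 PX PY
    · exact cosets_four f g _ (fun x => by simpa [hf, pow_succ, mul_smul] using hap x) g3 B P0 PX PY
    · exact cosets_five f g _ (fun x => by simpa [hf, pow_succ, mul_smul] using hap x) g3 B P0 PX PY
  obtain ⟨S, hfin, h1, h2, h3⟩ := hS
  exact finiteIndex_of_stable H a j S hfin h1 h2 h3

/-! ### Relations among the matrices -/

lemma eta_mul_etab (p : ℕ) : eta p * etab p = 1 := by
  rw [eta, etab, ← Complex.exp_add]; simp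

lemma phi_mul_phib (t : ℝ) : phi t * phib t = 1 := by
  rw [phi, phib, ← Complex.exp_add]; simp

lemma conj_eta (p : ℕ) : starRingEnd ℂ (eta p) = etab p := by
  rw [eta, etab, ← Complex.exp_conj]; simp [neg_div]

lemma conj_etab (p : ℕ) : starRingEnd ℂ (etab p) = eta p := by
  rw [← conj_eta, Complex.conj_conj]

lemma conj_phi (t : ℝ) : starRingEnd ℂ (phi t) = phib t := by
  rw [phi, phib, ← Complex.exp_conj]; simp [neg_div, map_ofNat]

lemma conj_phib (t : ℝ) : starRingEnd ℂ (phib t) = phi t := by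
  rw [← conj_phi, Complex.conj_conj]

lemma sin_pi_div_ne_zero {p : ℕ} (hp : 3 ≤ p) : Real.sin (Real.pi / p) ≠ 0 := by
  have hp' : (3 : ℝ) ≤ p := by exact_mod_cast hp
  apply ne_of_gt
  apply Real.sin_pos_of_pos_of_lt_pi
  · exact div_pos Real.pi_pos (by linarith)
  · rw [div_lt_iff₀ (by linarith)]
    nlinarith [Real.pi_pos]

lemma eta_sub_etab (p : ℕ) :
    eta p - etab p = 2 * Complex.I * (Real.sin (Real.pi / p) : ℝ) := by
  have h := Complex.two_sin ((Real.pi / p : ℝ) : ℂ)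
  rw [Complex.ofReal_sin]
  have e1 : eta p = Complex.exp (((Real.pi / p : ℝ) : ℂ) * Complex.I) := by
    rw [eta]; congr 1; push_cast; ring
  have e2 : etab p = Complex.exp (-((Real.pi / p : ℝ) : ℂ) * Complex.I) := by
    rw [etab]; congr 1; push_cast; ring
  rw [e1, e2]
  linear_combination (-Complex.I) * h + (Complex.exp (((Real.pi / p : ℝ) : ℂ) * Complex.I) -
    Complex.exp (-((Real.pi / p : ℝ) : ℂ) * Complex.I)) * Complex.I_sq

/-- The only property of `α` that matters: it ties the Hermitian form to the reflections. -/
lemma alpha_mul {p : ℕ} (hp : 3 ≤ p) : alpha p * (eta p - etab p) = Complex.I := by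
  have h : ((Real.sin (Real.pi / p) : ℝ) : ℂ) ≠ 0 :=
    Complex.ofReal_ne_zero.mpr (sin_pi_div_ne_zero hp)
  rw [eta_sub_etab, alpha]
  field_simp

lemma eta_pow {p : ℕ} (hp : 3 ≤ p) : (eta p ^ 2) ^ p = 1 := by
  have hp' : (p : ℂ) ≠ 0 := by exact_mod_cast (by omega : p ≠ 0)
  rw [eta, ← pow_mul, ← Complex.exp_nat_mul, Complex.exp_eq_one_iff]
  refine ⟨1, ?_⟩
  push_cast
  field_simp

lemma eta_sq_ne_one {p : ℕ} (hp : 3 ≤ p) : eta p ^ 2 - 1 ≠ 0 := by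
  intro h
  have h1 := alpha_mul hp
  have h2 := eta_mul_etab p
  have h3 : Complex.I * eta p = 0 := by
    linear_combination alpha p * h - eta p * h1 - alpha p * h2
  exact mul_ne_zero Complex.I_ne_zero (left_ne_zero_of_mul_eq_one h2) h3

lemma R1_pow {p : ℕ} (t : ℝ) (hp : p = 3 ∨ p = 4 ∨ p = 5) : R1 p t ^ p = 1 := by
  have h3 : 3 ≤ p := by omega
  have hq := eta_pow h3
  have hne := eta_sq_ne_one h3
  rw [R1]
  generalize -Complex.I * eta p * phib t = b
  generalize -Complex.I * eta p * phi t = c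
  generalize eta p ^ 2 = q at hq hne
  rcases hp with rfl | rfl | rfl
  · have hs : 1 + q + q ^ 2 = 0 := by
      apply mul_left_cancel₀ hne; linear_combination hq
    ext i k
    fin_cases i <;> fin_cases k <;> simp [pow_succ, Matrix.mul_apply, Fin.sum_univ_three]
    · linear_combination hq
    · linear_combination b * hs
    · linear_combination c * hs
  · have hs : 1 + q + q ^ 2 + q ^ 3 = 0 := by
      apply mul_left_cancel₀ hne; linear_combination hq
    ext i k
    fin_cases i <;> fin_cases k <;> simp [pow_succ, Matrix.mul_apply, Fin.sum_univ_three]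
    · linear_combination hq
    · linear_combination b * hs
    · linear_combination c * hs
  · have hs : 1 + q + q ^ 2 + q ^ 3 + q ^ 4 = 0 := by
      apply mul_left_cancel₀ hne; linear_combination hq
    ext i k
    fin_cases i <;> fin_cases k <;> simp [pow_succ, Matrix.mul_apply, Fin.sum_univ_three]
    · linear_combination hq
    · linear_combination b * hs
    · linear_combination c * hs

lemma Jmat_pow : Jmat ^ 3 = 1 := by
  ext i k
  fin_cases i <;> fin_cases k <;>
    simp [Jmat, pow_succ, Matrix.mul_apply, Fin.sum_univ_three]

lemma J_mul_R1 (p : ℕ) (t : ℝ) : Jmat * R1 p t = R2 p t * Jmat := by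
  ext i k
  fin_cases i <;> fin_cases k <;>
    simp [Jmat, R1, R2, Matrix.mul_apply, Fin.sum_univ_three]

lemma braid (p : ℕ) (t : ℝ) :
    R1 p t * R2 p t * R1 p t = R2 p t * R1 p t * R2 p t := by
  have h1 := phi_mul_phib t
  have h2 := Complex.I_sq
  rw [R1, R2]
  generalize phi t = u at *
  generalize phib t = w at *
  generalize eta p = e at *
  generalize Complex.I = I at *
  ext i k
  fin_cases i <;> fin_cases k <;> simp [Matrix.mul_apply, Fin.sum_univ_three] <;> grind

/-! ### Elements of the two stabilizers -/

/-- An invertible matrix which scales a linear functional maps its kernel onto itself. -/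
lemma image_eq_of_scale (p : ℕ) (t : ℝ) (v : Fin 3 → ℂ) (g : GL (Fin 3) ℂ) (c : ℂ) (hc : c ≠ 0)
    (h : ∀ x, form p t ((g : Matrix (Fin 3) (Fin 3) ℂ).mulVec x) v = c * form p t x v) :
    (fun x => (g : Matrix (Fin 3) (Fin 3) ℂ).mulVec x) '' {x | form p t x v = 0}
      = {x | form p t x v = 0} := by
  ext y
  constructor
  · rintro ⟨x, hx, rfl⟩
    change form p t _ v = 0
    rw [h, show form p t x v = 0 from hx, mul_zero]
  · intro hy
    have e : (g : Matrix (Fin 3) (Fin 3) ℂ).mulVec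
        (((g⁻¹ : GL (Fin 3) ℂ) : Matrix (Fin 3) (Fin 3) ℂ).mulVec y) = y := by
      rw [Matrix.mulVec_mulVec, ← Units.val_mul, mul_inv_cancel, Units.val_one, Matrix.one_mulVec]
    refine ⟨_, ?_, e⟩
    have hx := h (((g⁻¹ : GL (Fin 3) ℂ) : Matrix (Fin 3) (Fin 3) ℂ).mulVec y)
    rw [e, show form p t y v = 0 from hy] at hx
    exact (mul_eq_zero.mp hx.symm).resolve_left hc

lemma form_e1 (p : ℕ) (t : ℝ) (x : Fin 3 → ℂ) :
    form p t x ![1, 0, 0] = x 0 - alpha p * phib t * x 1 - alpha p * phi t * x 2 := by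
  simp [form, Hmat, dotProduct, Matrix.mulVec, Fin.sum_univ_three]
  ring

lemma form_v312 {p : ℕ} (hp : 3 ≤ p) (t : ℝ) (x : Fin 3 → ℂ) :
    form p t x (v312 p t) =
      (Complex.I * etab p * phi t + Complex.I * alpha p * eta p * phib t ^ 2 - alpha p * phi t) *
        (Complex.I * eta p * phi t * x 1 + x 2) := by
  have h1 := phi_mul_phib t
  have h2 := Complex.I_sq
  have h3 := alpha_mul hp
  have h4 := eta_mul_etab p
  simp [form, Hmat, v312, dotProduct, Matrix.mulVec, Fin.sum_univ_three, conj_eta, conj_etab,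
    conj_phi, conj_phib]
  generalize phi t = u at *
  generalize phib t = w at *
  generalize eta p = e at *
  generalize etab p = f at *
  generalize alpha p = al at *
  generalize Complex.I = I at *
  linear_combination x 0 * (I * al * (e - f) * h1 + I * h3 + h2) +
    x 1 * (I * u ^ 2 * h3 - I ^ 2 * u ^ 2 * h4 - I ^ 2 * al * e ^ 2 * w * h1 - al * e ^ 2 * w * h2 +
      w * (e * h3 + al * h4))

lemma R1_form {p : ℕ} (hp : 3 ≤ p) (t : ℝ) (x : Fin 3 → ℂ) :
    form p t ((R1 p t).mulVec x) ![1, 0, 0] = eta p ^ 2 * form p t x ![1, 0, 0] := by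
  have h3 := alpha_mul hp
  have h4 := eta_mul_etab p
  have key : alpha p * (eta p ^ 2 - 1) = Complex.I * eta p := by
    linear_combination eta p * h3 + alpha p * h4
  rw [form_e1, form_e1]
  simp [R1, dotProduct, Matrix.mulVec, Fin.sum_univ_three]
  linear_combination (phib t * x 1 + phi t * x 2) * key

lemma Y_form {p : ℕ} (hp : 3 ≤ p) (t : ℝ) (x : Fin 3 → ℂ) :
    form p t ((R2 p t * R1 p t * Jmat).mulVec x) ![1, 0, 0] =
      (-Complex.I * eta p * phib t) * form p t x ![1, 0, 0] := by
  have h1 := phi_mul_phib t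
  have h2 := Complex.I_sq
  have h3 := alpha_mul hp
  have h4 := eta_mul_etab p
  rw [form_e1, form_e1]
  simp [R1, R2, Jmat, dotProduct, Matrix.mul_apply, Matrix.mulVec, Fin.sum_univ_three]
  generalize phi t = u at *
  generalize phib t = w at *
  generalize eta p = e at *
  generalize etab p = f at *
  generalize alpha p = al at *
  generalize Complex.I = I at *
  have key : al * (e ^ 2 - 1) = I * e := by linear_combination e * h3 + al * h4
  linear_combination
    x 0 * (-I * e * w * I * al * e * h1 - al * e ^ 2 * w * h2) +
    x 1 * (-I ^ 2 * al * e ^ 2 * u * h1 - al * e ^ 2 * u * h2 + u * key) +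
    x 2 * (I * al * e * (e ^ 2 - 1) * h1 + I * e * key + e ^ 2 * h2)

lemma X_form {p : ℕ} (hp : 3 ≤ p) (t : ℝ) (x : Fin 3 → ℂ) :
    form p t ((Jmat * Jmat * R1 p t * (Jmat * Jmat)).mulVec x) (v312 p t) =
      (-Complex.I * eta p * phib t) * form p t x (v312 p t) := by
  have h1 := phi_mul_phib t
  have h2 := Complex.I_sq
  rw [form_v312 hp, form_v312 hp]
  simp [R1, Jmat, dotProduct, Matrix.mul_apply, Matrix.mulVec, Fin.sum_univ_three]
  generalize phi t = u at *
  generalize phib t = w at *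
  generalize eta p = e at *
  generalize etab p = f at *
  generalize alpha p = al at *
  generalize Complex.I = I at *
  linear_combination (I * f * u + I * al * e * w ^ 2 - al * u) * x 1 * e ^ 2 * (I ^ 2 * h1 + h2)

/-- For each admissible pair (p,t), the hybrid H(Γ₁, Γ₃₁₂) — the subgroup generated by the
stabilizers in Γ̃(p,t) of the subspaces polar to e₁ and to v₃₁₂ — has finite index in Γ̃(p,t). -/
theorem hybrid_stabilizers_finite_index (p : ℕ) (t : ℝ) (hadm : admissible p t)
    (R1' J' : GL (Fin 3) ℂ)
    (hR1 : (R1' : Matrix (Fin 3) (Fin 3) ℂ) = R1 p t)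
    (hJ : (J' : Matrix (Fin 3) (Fin 3) ℂ) = Jmat) :
    let Γ : Subgroup (GL (Fin 3) ℂ) := Subgroup.closure {R1', J'}
    let S1 : Set (Fin 3 → ℂ) := {x | form p t x ![1, 0, 0] = 0}
    let S312 : Set (Fin 3 → ℂ) := {x | form p t x (v312 p t) = 0}
    let Λ1 : Set (GL (Fin 3) ℂ) :=
      {g | g ∈ Γ ∧ (fun x => (g : Matrix (Fin 3) (Fin 3) ℂ).mulVec x) '' S1 = S1}
    let Λ312 : Set (GL (Fin 3) ℂ) :=
      {g | g ∈ Γ ∧ (fun x => (g : Matrix (Fin 3) (Fin 3) ℂ).mulVec x) '' S312 = S312}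
    let Hyb : Subgroup (GL (Fin 3) ℂ) := Subgroup.closure (Λ1 ∪ Λ312)
    Hyb ≤ Γ ∧ (Hyb.subgroupOf Γ).FiniteIndex := by
  intro Γ S1 S312 Λ1 Λ312 Hyb
  have hp : p = 3 ∨ p = 4 ∨ p = 5 := by
    rcases hadm with h | h | h <;> simp [h.1]
  have hp3 : 3 ≤ p := by omega
  have hΓ1 : R1' ∈ Γ := Subgroup.subset_closure (by simp)
  have hΓJ : J' ∈ Γ := Subgroup.subset_closure (by simp)
  have hJ3 : J' ^ 3 = 1 := by
    apply Units.ext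
    rw [Units.val_pow_eq_pow_val, hJ, Jmat_pow, Units.val_one]
  have hJi : J'⁻¹ = J' * J' := by
    rw [inv_eq_iff_mul_eq_one, ← pow_three, hJ3]
  have hR1p : R1' ^ p = 1 := by
    apply Units.ext
    rw [Units.val_pow_eq_pow_val, hR1, R1_pow t hp, Units.val_one]
  have hR2 : ((J' * R1' * J'⁻¹ : GL (Fin 3) ℂ) : Matrix (Fin 3) (Fin 3) ℂ) = R2 p t := by
    rw [Units.val_mul, Units.val_mul, hJ, hR1, J_mul_R1, ← hJ, Matrix.mul_assoc, ← Units.val_mul,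
      mul_inv_cancel, Units.val_one, Matrix.mul_one]
  have hbraid : R1' * (J' * R1' * J'⁻¹) * R1' =
      (J' * R1' * J'⁻¹) * R1' * (J' * R1' * J'⁻¹) := by
    apply Units.ext
    simp only [Units.val_mul R1', Units.val_mul (J' * R1' * J'⁻¹), Units.val_mul (_ * _) R1',
      Units.val_mul (_ * R1') (J' * R1' * J'⁻¹), hR2, hR1]
    exact braid p t
  have heta : eta p ≠ 0 := left_ne_zero_of_mul_eq_one (eta_mul_etab p)
  have hphib : phib t ≠ 0 := right_ne_zero_of_mul_eq_one (phi_mul_phib t)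
  have hc : -Complex.I * eta p * phib t ≠ 0 :=
    mul_ne_zero (mul_ne_zero (neg_ne_zero.mpr Complex.I_ne_zero) heta) hphib
  have hA : R1' ∈ Hyb := by
    refine Subgroup.subset_closure (Or.inl ⟨hΓ1, ?_⟩)
    refine image_eq_of_scale p t _ _ _ (pow_ne_zero 2 heta) fun x => ?_
    rw [hR1]
    exact R1_form hp3 t x
  have hX : J'⁻¹ * R1' * J'⁻¹ ∈ Hyb := by
    refine Subgroup.subset_closure (Or.inr ⟨?_, ?_⟩)
    · exact mul_mem (mul_mem (inv_mem hΓJ) hΓ1) (inv_mem hΓJ)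
    refine image_eq_of_scale p t _ _ _ hc fun x => ?_
    rw [hJi]
    simp only [Units.val_mul, hJ, hR1]
    exact X_form hp3 t x
  have hY : J' * R1' * J'⁻¹ * R1' * J' ∈ Hyb := by
    refine Subgroup.subset_closure (Or.inl ⟨?_, ?_⟩)
    · exact mul_mem (mul_mem (mul_mem (mul_mem hΓJ hΓ1) (inv_mem hΓJ)) hΓ1) hΓJ
    refine image_eq_of_scale p t _ _ _ hc fun x => ?_
    rw [Units.val_mul, Units.val_mul, hR2, hR1, hJ]
    exact Y_form hp3 t x
  refine ⟨?_, finiteIndex_of_relations Hyb R1' J' p hp hJ3 hR1p ?_ hA hX hY⟩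
  · rw [Subgroup.closure_le]
    rintro g (hg | hg)
    · exact hg.1
    · exact hg.1
  · calc R1' * J' * R1' * J'⁻¹ * R1' * J' = (R1' * (J' * R1' * J'⁻¹) * R1') * J' := by group
      _ = J' * R1' * J'⁻¹ * R1' * J' * R1' := by rw [hbraid]; group
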